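/- For every δ, ε ∈ (0,1) there exist κ ∈ (0,1), a natural number N, and n_0 such that for all n ≥ n_0, with probability at least 1 − δ over the Gaussian disorder G, the entire function Z_G has no zeros in the open disk D(0, κ·β_2nd) and has at most N zeros in the open disk D(0, (1−ε)·β_2nd). (Since Z_G(0) = 1, the zero set of Z_G in any bounded subset of ℂ is finite, so the number of zeros is well defined.) -/

import Mathlib

/-!
The proof is a second moment estimate combined with Jensen's formula.

Since `H_G` is a centred Gaussian field with covariance `n ξ(R(σ, τ))`, where `R` is the overlap,
the entire function `Y(β) = Z_G(β) / E Z_G(β)` (`normZ`) has the same zeros as `Z_G`, satisfies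
`Y(0) = 1`, and `E ‖Y(β)‖² = 2^{-n} ∑_σ exp(‖β‖² n ξ(mag σ / n))` (`integral_normZ_sq`).

For `R < β_2nd` this is bounded uniformly in `n` on the circle of radius `R`
(`exists_second_moment_bound`). By definition of the threshold, `R² ξ ≤ θ I` on `[-1, 1]` for some
`θ < 1`, where `I = -h` is the rate function of the magnetization; Cramér's bound
`P(n I(mag / n) ≥ u) ≤ 2 e^{-u}` (`card_le_of_rate`) then shows that `exp(θ n I(mag / n))` has
bounded expectation.

By Markov's inequality the mean of `‖Y‖²` over that circle is at most `A = C / δ` with probability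
at least `1 - δ` (`prob_lintegral_circle_le`). On this event Jensen's formula and `log x ≤ x²`
bound the number of zeros in the disk of radius `s < R` by `A / log (R / s)`
(`card_zeros_mul_log_le_of_lintegral`). With `R = (1 - ε/2) β_2nd`, the radius `s = (1 - ε) β_2nd`
gives `N`, and a small enough multiple of `β_2nd` makes the bound less than one.
-/

open MeasureTheory ProbabilityTheory

/-- The value `±1` of a Boolean spin. -/
noncomputable def spin (b : Bool) : ℝ := if b then 1 else -1

/-- The magnetization `⟨σ, 1⟩ = Σ_i σ_i` of a spin configuration. -/
noncomputable def mag {n : ℕ} (σ : Fin n → Bool) : ℝ := ∑ i, spin (σ i)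

/-- Index set for the Gaussian disorder. -/
abbrev SpinIdx (pmax n : ℕ) := Σ p : Fin (pmax + 1), (Fin (p : ℕ) → Fin n)

/-- The disorder distribution: i.i.d. standard Gaussians over all index tuples. -/
noncomputable def disorder (pmax n : ℕ) : Measure ((SpinIdx pmax n) → ℝ) :=
  Measure.pi fun _ => gaussianReal 0 1

/-- The mixed `p`-spin Hamiltonian. -/
noncomputable def hamiltonian (pmax n : ℕ) (γ : ℕ → ℝ) (G : SpinIdx pmax n → ℝ)
    (σ : Fin n → Bool) : ℝ :=
  ∑ p : Fin (pmax + 1), if 2 ≤ (p : ℕ) then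
      γ (p : ℕ) * (n : ℝ) ^ (-((((p : ℕ) : ℝ) - 1) / 2)) *
        ∑ α : Fin (p : ℕ) → Fin n, G ⟨p, α⟩ * ∏ j, spin (σ (α j))
    else 0

/-- The mixture function `ξ(s) = Σ_{p=2}^{p_max} γ_p² s^p`. -/
noncomputable def mix (pmax : ℕ) (γ : ℕ → ℝ) (s : ℝ) : ℝ :=
  ∑ p ∈ Finset.Icc 2 pmax, γ p ^ 2 * s ^ p

/-- The (complex) partition function `Z_G(β) = 2^{-n} Σ_σ exp(β H_G(σ))`. -/
noncomputable def Zpart (pmax n : ℕ) (γ : ℕ → ℝ) (G : SpinIdx pmax n → ℝ) (β : ℂ) : ℂ :=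
  (2 : ℂ) ^ (-(n : ℤ)) * ∑ σ : Fin n → Bool,
    Complex.exp (β * (hamiltonian pmax n γ G σ : ℂ))

/-- The entropy function
`h(m) = -(1/2)((1-m)log(1-m) + (1+m)log(1+m))` (with `0·log 0 = 0`). -/
noncomputable def entH (m : ℝ) : ℝ :=
  -(1 / 2) * ((1 - m) * Real.log (1 - m) + (1 + m) * Real.log (1 + m))

/-- The second moment threshold
`β_2nd = sup{β ≥ 0 : 2β²γ₂² < 1 and β²ξ(m) + h(m) < 0 for all m ∈ [−1,1]∖{0}}`. -/
noncomputable def beta2nd (pmax : ℕ) (γ : ℕ → ℝ) : ℝ :=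
  sSup {β : ℝ | 0 ≤ β ∧ 2 * β ^ 2 * γ 2 ^ 2 < 1 ∧
    ∀ m ∈ Set.Icc (-1 : ℝ) 1, m ≠ 0 → β ^ 2 * mix pmax γ m + entH m < 0}

/-! ### Large deviations of the magnetization -/

lemma spin_mul_self (b : Bool) : spin b * spin b = 1 := by cases b <;> simp [spin]

lemma entH_zero : entH 0 = 0 := by simp [entH]

lemma entH_neg (m : ℝ) : entH (-m) = entH m := by
  unfold entH
  rw [sub_neg_eq_add, ← sub_eq_add_neg]
  ring

lemma entH_abs (m : ℝ) : entH |m| = entH m := by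
  rcases abs_choice m with h | h <;> rw [h]
  exact entH_neg m

lemma mul_log_bounds {x : ℝ} (hx : 0 ≤ x) :
    x - 1 ≤ x * Real.log x ∧ x * Real.log x ≤ x * (x - 1) := by
  rcases hx.eq_or_lt with rfl | hx
  · simp
  · refine ⟨?_, mul_le_mul_of_nonneg_left (Real.log_le_sub_one_of_pos hx) hx.le⟩
    have h := Real.one_sub_inv_le_log_of_pos hx
    have := mul_le_mul_of_nonneg_left h hx.le
    rwa [mul_sub, mul_one, mul_inv_cancel₀ hx.ne'] at this

lemma entH_nonpos {m : ℝ} (h : |m| ≤ 1) : entH m ≤ 0 := by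
  obtain ⟨h1, h2⟩ := abs_le.mp h
  have a := (mul_log_bounds (x := 1 - m) (by linarith)).1
  have b := (mul_log_bounds (x := 1 + m) (by linarith)).1
  unfold entH
  linarith

lemma neg_one_le_entH {m : ℝ} (h : |m| ≤ 1) : -1 ≤ entH m := by
  obtain ⟨h1, h2⟩ := abs_le.mp h
  have a := (mul_log_bounds (x := 1 - m) (by linarith)).2
  have b := (mul_log_bounds (x := 1 + m) (by linarith)).2
  unfold entH
  nlinarith

lemma abs_mag_le {n : ℕ} (σ : Fin n → Bool) : |mag σ| ≤ n := by
  unfold mag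
  refine (Finset.abs_sum_le_sum_abs _ _).trans ?_
  have : ∀ i ∈ Finset.univ, |spin (σ i)| ≤ (1 : ℝ) := fun i _ => by
    cases σ i <;> simp [spin]
  simpa using Finset.sum_le_sum this

lemma abs_mag_div_le {n : ℕ} (σ : Fin n → Bool) : |mag σ / n| ≤ 1 := by
  rw [abs_div, Nat.abs_cast]
  exact div_le_one_of_le₀ (abs_mag_le σ) (Nat.cast_nonneg n)

/-- The tilting weight `∏ (1 + m σ_i)`, of uniform mean one, is at least `e^{-n h(m)}` on
configurations of magnetization at least `n m`. -/
lemma exp_entH_le_prod {n : ℕ} {m : ℝ} (hm0 : 0 ≤ m) (hm1 : m ≤ 1)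
    (σ : Fin n → Bool) (h : n * m ≤ mag σ) :
    Real.exp (-(n * entH m)) ≤ ∏ i, (1 + m * spin (σ i)) := by
  rcases hm1.eq_or_lt with rfl | hm1
  · -- magnetization `n` forces all spins to be `+1`
    have hnn : ∀ i ∈ Finset.univ, 0 ≤ 1 - spin (σ i) := fun i _ => by
      cases σ i <;> norm_num [spin]
    have hs : ∑ i, (1 - spin (σ i)) = 0 := by
      refine le_antisymm ?_ (Finset.sum_nonneg hnn)
      rw [Finset.sum_sub_distrib]
      simp only [mag] at h
      simp
      linarith
    have hall := (Finset.sum_eq_zero_iff_of_nonneg hnn).mp hs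
    have : ∀ i, spin (σ i) = 1 := fun i => by linarith [hall i (Finset.mem_univ i)]
    simp only [this, entH]
    norm_num
    rw [Real.exp_nat_mul, show (1 / 2 : ℝ) * (2 * Real.log 2) = Real.log 2 by ring,
      Real.exp_log (by norm_num)]
  · have hp : 0 < 1 + m := by linarith
    have hq : 0 < 1 - m := by linarith
    have key : ∀ b : Bool, 1 + m * spin b = Real.exp
        ((Real.log (1 + m) + Real.log (1 - m)) / 2
          + spin b * ((Real.log (1 + m) - Real.log (1 - m)) / 2)) := by
      intro b
      cases b
      · simp only [spin]
        norm_num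
        rw [show (Real.log (1 + m) + Real.log (1 - m)) / 2
          + -((Real.log (1 + m) - Real.log (1 - m)) / 2) = Real.log (1 - m) by ring,
          Real.exp_log hq]
        ring
      · simp only [spin]
        norm_num
        rw [show (Real.log (1 + m) + Real.log (1 - m)) / 2
          + ((Real.log (1 + m) - Real.log (1 - m)) / 2) = Real.log (1 + m) by ring,
          Real.exp_log hp]
    rw [Finset.prod_congr rfl (fun i _ => key (σ i)), ← Real.exp_sum, Real.exp_le_exp,
      Finset.sum_add_distrib, ← Finset.sum_mul]
    have hlog : 0 ≤ Real.log (1 + m) - Real.log (1 - m) :=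
      sub_nonneg.mpr (Real.log_le_log hq (by linarith))
    have := mul_le_mul_of_nonneg_right h (div_nonneg hlog (by norm_num : (0:ℝ) ≤ 2))
    simp only [mag] at this
    simp only [Finset.sum_const, Finset.card_univ, Fintype.card_fin, nsmul_eq_mul]
    unfold entH
    linarith

lemma sum_prod_weight (n : ℕ) (m : ℝ) :
    ∑ σ : Fin n → Bool, ∏ i, (1 + m * spin (σ i)) = 2 ^ n := by
  have h := Finset.prod_univ_sum (fun _ : Fin n => (Finset.univ : Finset Bool))
    (fun _ b => 1 + m * spin b)
  rw [Fintype.piFinset_univ] at h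
  rw [← h]
  have : ∑ b : Bool, (1 + m * spin b) = 2 := by
    simp [spin]
    ring
  simp only [this, Finset.prod_const, Finset.card_univ, Fintype.card_fin]

/-- Cramér's upper bound for the magnetization of a uniform configuration: the event that the
rate function `-n h(mag/n)` is at least `u` has probability at most `2 e^{-u}`. -/
lemma card_le_of_rate {n : ℕ} (hn : 0 < n) (S : Finset (Fin n → Bool)) (u : ℝ)
    (hS : ∀ σ ∈ S, u ≤ -(n * entH (mag σ / n))) :
    (S.card : ℝ) ≤ 2 * 2 ^ n * Real.exp (-u) := by
  have hn' : (0 : ℝ) < n := Nat.cast_pos.mpr hn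
  rcases S.eq_empty_or_nonempty with rfl | hne
  · simp
    positivity
  -- tilting by the least `|mag|` occurring in `S` avoids any monotonicity of the entropy
  obtain ⟨σ₀, hσ₀, hmin⟩ := S.exists_min_image (fun σ => |mag σ|) hne
  set m : ℝ := |mag σ₀ / n| with hm
  have hm0 : 0 ≤ m := abs_nonneg _
  have hm1 : m ≤ 1 := abs_mag_div_le σ₀
  have hnm : n * m = |mag σ₀| := by
    rw [hm, abs_div, Nat.abs_cast]
    field_simp
  have hu : Real.exp u ≤ Real.exp (-(n * entH m)) := by
    rw [Real.exp_le_exp, hm, entH_abs]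
    exact hS σ₀ hσ₀
  let P : ℝ → (Fin n → Bool) → ℝ := fun t σ => ∏ i, (1 + t * spin (σ i))
  have hPsum : ∀ t, ∑ σ, P t σ = 2 ^ n := sum_prod_weight n
  have hpos : ∀ (t : ℝ), |t| ≤ 1 → ∀ σ : Fin n → Bool, 0 ≤ P t σ := by
    intro t ht σ
    obtain ⟨h1, h2⟩ := abs_le.mp ht
    refine Finset.prod_nonneg fun i _ => ?_
    cases σ i <;> simp [spin] <;> linarith
  have habs : |m| ≤ 1 := by rwa [abs_of_nonneg hm0]
  have habs' : |(-m)| ≤ 1 := by rwa [abs_neg]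
  have hle : ∀ σ ∈ S, Real.exp u ≤
      P m σ + P (-m) σ := by
    intro σ hσ
    have hmσ := hmin σ hσ
    rw [← hnm] at hmσ
    rcases le_abs.mp hmσ with h | h
    · have h1 : Real.exp (-(n * entH m)) ≤ P m σ := exp_entH_le_prod hm0 hm1 σ h
      linarith [hpos (-m) habs' σ]
    · have hflip : ∀ b : Bool, spin (!b) = - spin b := by
        intro b
        cases b <;> simp [spin]
      have hmag : mag (fun i => !σ i) = - mag σ := by
        simp [mag, hflip]
      have := exp_entH_le_prod hm0 hm1 (fun i => !σ i) (by rw [hmag]; exact h)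
      simp only [hflip] at this
      have h2 : 0 ≤ P m σ := hpos m habs σ
      simp only [P, mul_neg, neg_mul] at this h2 ⊢
      linarith
  have hsum : (S.card : ℝ) * Real.exp u ≤ 2 * 2 ^ n := by
    calc (S.card : ℝ) * Real.exp u = ∑ σ ∈ S, Real.exp u := by simp
      _ ≤ ∑ σ ∈ S, (P m σ + P (-m) σ) :=
        Finset.sum_le_sum hle
      _ ≤ ∑ σ, (P m σ + P (-m) σ) :=
        Finset.sum_le_sum_of_subset_of_nonneg (Finset.subset_univ S)
          fun σ _ _ => add_nonneg (hpos m habs σ) (hpos (-m) habs' σ)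
      _ = 2 * 2 ^ n := by
        rw [Finset.sum_add_distrib, hPsum, hPsum]
        ring
  rw [Real.exp_neg, ← div_eq_mul_inv, le_div_iff₀ (Real.exp_pos u)]
  exact hsum

/-- The rate `-n h(mag/n)` has exponential moments of every order `θ < 1`, uniformly in `n`:
by the tail bound it is dominated by an exponential variable of rate one. -/
lemma sum_exp_rate_le {θ : ℝ} (h0 : 0 ≤ θ) (h1 : θ < 1) {n : ℕ} (hn : 0 < n) :
    ∑ σ : Fin n → Bool, Real.exp (θ * -(n * entH (mag σ / n)))
      ≤ 2 ^ n * (2 * Real.exp θ * (1 - Real.exp (θ - 1))⁻¹) := by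
  classical
  set U : (Fin n → Bool) → ℝ := fun σ => -(n * entH (mag σ / n)) with hU
  have hU0 : ∀ σ, 0 ≤ U σ := fun σ => by
    have := mul_nonneg (Nat.cast_nonneg (α := ℝ) n)
      (neg_nonneg.mpr (entH_nonpos (abs_mag_div_le σ)))
    simp only [hU]
    linarith
  have hUn : ∀ σ, U σ ≤ n := fun σ => by
    have := mul_le_mul_of_nonneg_left (neg_one_le_entH (abs_mag_div_le σ))
      (Nat.cast_nonneg (α := ℝ) n)
    simp only [hU]
    linarith
  have hq : Real.exp (θ - 1) < 1 := Real.exp_lt_one_iff.mpr (by linarith)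
  have hstep : ∀ σ, Real.exp (θ * U σ) ≤
      ∑ k ∈ Finset.range (n + 1), if (k : ℝ) ≤ U σ then Real.exp (θ * (k + 1)) else 0 := by
    intro σ
    have hk : ⌊U σ⌋₊ ∈ Finset.range (n + 1) := by
      rw [Finset.mem_range, Nat.lt_succ_iff]
      exact Nat.floor_le_of_le (hUn σ)
    refine le_trans ?_ (Finset.single_le_sum (fun k _ => ?_) hk)
    · rw [if_pos (Nat.floor_le (hU0 σ)), Real.exp_le_exp]
      exact mul_le_mul_of_nonneg_left (Nat.lt_floor_add_one _).le h0
    · split_ifs <;> positivity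
  calc ∑ σ, Real.exp (θ * U σ)
      ≤ ∑ σ, ∑ k ∈ Finset.range (n + 1),
          (if (k : ℝ) ≤ U σ then Real.exp (θ * (k + 1)) else 0) :=
        Finset.sum_le_sum fun σ _ => hstep σ
    _ = ∑ k ∈ Finset.range (n + 1), ∑ σ,
          (if (k : ℝ) ≤ U σ then Real.exp (θ * (k + 1)) else 0) := Finset.sum_comm
    _ ≤ ∑ k ∈ Finset.range (n + 1), 2 ^ n * (2 * Real.exp θ) * Real.exp (θ - 1) ^ k := by
        refine Finset.sum_le_sum fun k _ => ?_
        rw [← Finset.sum_filter, Finset.sum_const, nsmul_eq_mul]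
        have hc := card_le_of_rate hn (Finset.univ.filter fun σ => (k : ℝ) ≤ U σ) k
          (fun σ hσ => (Finset.mem_filter.mp hσ).2)
        refine (mul_le_mul_of_nonneg_right hc (Real.exp_pos _).le).trans_eq ?_
        rw [← Real.exp_nat_mul]
        have : Real.exp (-(k : ℝ)) * Real.exp (θ * (k + 1))
            = Real.exp θ * Real.exp (k * (θ - 1)) := by
          rw [← Real.exp_add, ← Real.exp_add]
          congr 1
          ring
        linear_combination 2 * 2 ^ n * this
    _ ≤ 2 ^ n * (2 * Real.exp θ) * (1 - Real.exp (θ - 1))⁻¹ := by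
        rw [← Finset.mul_sum]
        refine mul_le_mul_of_nonneg_left ?_ (by positivity)
        rw [← tsum_geometric_of_lt_one (Real.exp_pos _).le hq]
        exact (summable_geometric_of_lt_one (Real.exp_pos _).le hq).sum_le_tsum _
          fun k _ => by positivity
    _ = _ := by ring

/-! ### Boundedness below the threshold -/

/-- Below the second moment threshold the overlap sum of the second moment is bounded uniformly
in `n`, because `R² ξ ≤ θ (-h)` on `[-1, 1]` for some `θ < 1`. -/
lemma exists_second_moment_bound (pmax : ℕ) (γ : ℕ → ℝ) {R : ℝ} (hR0 : 0 < R)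
    (hR : R < beta2nd pmax γ) :
    ∃ C : ℝ, 0 < C ∧ ∀ n : ℕ, 0 < n →
      ∑ σ : Fin n → Bool, Real.exp (R ^ 2 * (n * mix pmax γ (mag σ / n))) ≤ 2 ^ n * C := by
  obtain ⟨b, ⟨hb0, -, hb⟩, hRb⟩ : ∃ b ∈ {β : ℝ | 0 ≤ β ∧ 2 * β ^ 2 * γ 2 ^ 2 < 1 ∧
      ∀ m ∈ Set.Icc (-1 : ℝ) 1, m ≠ 0 → β ^ 2 * mix pmax γ m + entH m < 0}, R < b := by
    refine exists_lt_of_lt_csSup ?_ hR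
    rw [Set.nonempty_iff_ne_empty]
    intro h
    rw [beta2nd, h, Real.sSup_empty] at hR
    linarith
  have hbpos : 0 < b := hR0.trans hRb
  set θ : ℝ := R ^ 2 / b ^ 2 with hθ
  have hθ0 : 0 ≤ θ := by positivity
  have hθ1 : θ < 1 := by
    rw [hθ, div_lt_one (by positivity)]
    exact pow_lt_pow_left₀ hRb hR0.le two_ne_zero
  have hmix : ∀ m, |m| ≤ 1 → R ^ 2 * mix pmax γ m ≤ θ * -entH m := by
    intro m hm
    have h : b ^ 2 * mix pmax γ m ≤ -entH m := by
      by_cases hm0 : m = 0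
      · subst hm0
        have : mix pmax γ 0 = 0 := by
          refine Finset.sum_eq_zero fun p hp => ?_
          have := (Finset.mem_Icc.mp hp).1
          rw [zero_pow (by omega), mul_zero]
        rw [this, entH_zero]
        simp
      · linarith [hb m (abs_le.mp hm) hm0]
    have h2 := mul_le_mul_of_nonneg_left h hθ0
    have h3 : θ * (b ^ 2 * mix pmax γ m) = R ^ 2 * mix pmax γ m := by
      rw [hθ]
      field_simp
    linarith
  refine ⟨2 * Real.exp θ * (1 - Real.exp (θ - 1))⁻¹, ?_, fun n hn => ?_⟩
  · have : Real.exp (θ - 1) < 1 := Real.exp_lt_one_iff.mpr (by linarith)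
    have : 0 < 1 - Real.exp (θ - 1) := by linarith
    positivity
  · refine le_trans (Finset.sum_le_sum fun σ _ => ?_) (sum_exp_rate_le hθ0 hθ1 hn)
    rw [Real.exp_le_exp]
    have := mul_le_mul_of_nonneg_left (hmix _ (abs_mag_div_le σ)) (Nat.cast_nonneg (α := ℝ) n)
    linarith

/-! ### Counting zeros by Jensen's formula -/

/-- Jensen's formula as a zero count: an entire `f` with `f 0 = 1` has at most
`A / log (R / r)` zeros in the disk of radius `r`, if `A` bounds the mean of `log ‖f‖` over the
circle of radius `R`. -/
lemma card_zeros_mul_log_le {f : ℂ → ℂ} (hf : Differentiable ℂ f) (hf0 : f 0 = 1)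
    {r R A : ℝ} (hr : 0 < r) (hrR : r < R)
    (hA : Real.circleAverage (fun z => Real.log ‖f z‖) 0 R ≤ A)
    (S : Finset ℂ) (hS : ∀ z ∈ S, z ∈ Metric.ball (0 : ℂ) r ∧ f z = 0) :
    S.card * Real.log (R / r) ≤ A := by
  have hR : 0 < R := hr.trans hrR
  have han : AnalyticOnNhd ℂ f (Metric.closedBall 0 |R|) := fun z _ => hf.analyticAt z
  have hJ := han.circleAverage_log_norm hR.ne' (by simp [hf0])
  rw [hf0, norm_one, Real.log_one, add_zero] at hJ
  rw [hJ] at hA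
  refine le_trans ?_ hA
  have hfin : (Function.support fun u =>
      (MeromorphicOn.divisor f (Metric.closedBall 0 |R|) u : ℝ) *
        Real.log (R * ‖0 - u‖⁻¹)).Finite :=
    ((MeromorphicOn.divisor f (Metric.closedBall 0 |R|)).finiteSupport
      (isCompact_closedBall 0 |R|)).subset fun u hu => by
        intro h
        exact hu (by simp [h])
  have hnn : ∀ u, 0 ≤ (MeromorphicOn.divisor f (Metric.closedBall 0 |R|) u : ℝ) *
        Real.log (R * ‖0 - u‖⁻¹) := by
    intro u
    by_cases hu : u ∈ Metric.closedBall (0 : ℂ) |R|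
    · refine mul_nonneg (by exact_mod_cast MeromorphicOn.AnalyticOnNhd.divisor_nonneg han u) ?_
      rcases eq_or_ne u 0 with rfl | h0
      · simp
      · refine Real.log_nonneg ?_
        have hu' : ‖u‖ ≤ R := by simpa [abs_of_pos hR] using hu
        rw [zero_sub, norm_neg, ← div_eq_mul_inv, one_le_div (norm_pos_iff.mpr h0)]
        exact hu'
    · simp [hu]
  rw [finsum_eq_sum_of_support_subset (s := hfin.toFinset ∪ S) _
    (fun x hx => by simp only [Finset.coe_union, Set.mem_union]; left; simpa using hx)]
  calc (S.card : ℝ) * Real.log (R / r) = ∑ _u ∈ S, Real.log (R / r) := by simp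
    _ ≤ ∑ u ∈ S, (MeromorphicOn.divisor f (Metric.closedBall 0 |R|) u : ℝ) *
        Real.log (R * ‖0 - u‖⁻¹) := by
      refine Finset.sum_le_sum fun u hu => ?_
      obtain ⟨hub, hu0⟩ := hS u hu
      have hur : ‖u‖ < r := by simpa using hub
      have hu_ne : u ≠ 0 := by
        rintro rfl
        simp [hf0] at hu0
      have hup : 0 < ‖u‖ := norm_pos_iff.mpr hu_ne
      have hmem : u ∈ Metric.closedBall (0 : ℂ) |R| := by
        simp [abs_of_pos hR]
        linarith
      -- a zero of an entire function that is not identically zero has order at least one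
      have hone : (1 : ℝ) ≤ MeromorphicOn.divisor f (Metric.closedBall 0 |R|) u := by
        rw [MeromorphicOn.AnalyticOnNhd.divisor_apply han hmem]
        have htop : analyticOrderAt f u ≠ ⊤ := by
          refine AnalyticOnNhd.analyticOrderAt_ne_top_of_isPreconnected (U := Set.univ)
            (x := (0 : ℂ)) (fun z _ => hf.analyticAt z) isPreconnected_univ trivial trivial ?_
          rw [(hf.analyticAt 0).analyticOrderAt_eq_zero.mpr (by simp [hf0])]
          simp
        have hz : analyticOrderAt f u ≠ 0 := (hf.analyticAt u).analyticOrderAt_ne_zero.mpr hu0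
        obtain ⟨k, hk⟩ := ENat.ne_top_iff_exists.mp htop
        rw [← hk] at hz ⊢
        have hk0 : k ≠ 0 := by simpa using hz
        have h1 : 1 ≤ k := Nat.one_le_iff_ne_zero.mpr hk0
        simp
        exact_mod_cast h1
      have hlog : Real.log (R / r) ≤ Real.log (R * ‖0 - u‖⁻¹) := by
        rw [zero_sub, norm_neg, ← div_eq_mul_inv]
        refine Real.log_le_log (by positivity) ?_
        gcongr
      have hlog0 : 0 ≤ Real.log (R / r) := Real.log_nonneg (by rw [one_le_div hr]; exact hrR.le)
      nlinarith
    _ ≤ _ := Finset.sum_le_sum_of_subset_of_nonneg Finset.subset_union_right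
        fun u _ _ => hnn u

/-- The mean of `log ‖f‖` over a circle is at most the mean of `‖f‖²`. -/
lemma circleAverage_log_norm_le {f : ℂ → ℂ} (hf : Differentiable ℂ f) (R : ℝ) :
    Real.circleAverage (fun z => Real.log ‖f z‖) 0 R
      ≤ Real.circleAverage (fun z => ‖f z‖ ^ 2) 0 R := by
  refine Real.circleAverage_mono ?_ ?_ fun z _ => ?_
  · exact MeromorphicOn.circleIntegrable_log_norm
      (AnalyticOnNhd.meromorphicOn fun z _ => hf.analyticAt z)
  · exact ContinuousOn.circleIntegrable' (by have := hf.continuous; fun_prop)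
  · rcases (norm_nonneg (f z)).eq_or_lt with h | h
    · rw [← h]
      simp
    · nlinarith [Real.log_le_sub_one_of_pos h, sq_nonneg (‖f z‖ - 1)]

/-- Mean-square form of the zero count, with the circle integral as a Lebesgue integral so that it
can be interchanged with the expectation. -/
lemma card_zeros_mul_log_le_of_lintegral {f : ℂ → ℂ} (hf : Differentiable ℂ f) (hf0 : f 0 = 1)
    {r R A : ℝ} (hr : 0 < r) (hrR : r < R) (hA0 : 0 ≤ A)
    (hA : ∫⁻ θ in Set.Ioc 0 (2 * Real.pi), ENNReal.ofReal (‖f (circleMap 0 R θ)‖ ^ 2)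
      ≤ ENNReal.ofReal (2 * Real.pi * A))
    (S : Finset ℂ) (hS : ∀ z ∈ S, z ∈ Metric.ball (0 : ℂ) r ∧ f z = 0) :
    S.card * Real.log (R / r) ≤ A := by
  refine card_zeros_mul_log_le hf hf0 hr hrR ((circleAverage_log_norm_le hf R).trans ?_) S hS
  have hc : Continuous fun θ => ‖f (circleMap 0 R θ)‖ ^ 2 := by
    have := hf.continuous
    have := continuous_circleMap 0 R
    fun_prop
  rw [Real.circleAverage_def, intervalIntegral.integral_of_le Real.two_pi_pos.le,
    integral_eq_lintegral_of_nonneg_ae (Filter.Eventually.of_forall fun θ => by positivity)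
      hc.aestronglyMeasurable, smul_eq_mul, inv_mul_le_iff₀ Real.two_pi_pos]
  exact ENNReal.toReal_le_of_le_ofReal (by positivity) hA

/-! ### The Gaussian second moment -/

/-- The coefficients of the Gaussian variables in `H_G(σ)`. -/
noncomputable def hamCoef (pmax n : ℕ) (γ : ℕ → ℝ) (σ : Fin n → Bool) (I : SpinIdx pmax n) : ℝ :=
  if 2 ≤ (I.1 : ℕ) then
    γ (I.1 : ℕ) * (n : ℝ) ^ (-((((I.1 : ℕ) : ℝ) - 1) / 2)) * ∏ j, spin (σ (I.2 j))
  else 0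

lemma hamiltonian_eq_sum (pmax n : ℕ) (γ : ℕ → ℝ) (G : SpinIdx pmax n → ℝ) (σ : Fin n → Bool) :
    hamiltonian pmax n γ G σ = ∑ I, hamCoef pmax n γ σ I * G I := by
  unfold hamiltonian hamCoef
  rw [Fintype.sum_sigma]
  refine Finset.sum_congr rfl fun p _ => ?_
  split_ifs with h
  · rw [Finset.mul_sum]
    exact Finset.sum_congr rfl fun α _ => by ring
  · simp

/-- The sitewise product `σ τ` of two spin configurations, whose magnetization is their overlap. -/
def overlapConf {n : ℕ} (σ τ : Fin n → Bool) : Fin n → Bool := fun i => σ i == τ i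

lemma spin_beq (a b : Bool) : spin (a == b) = spin a * spin b := by
  cases a <;> cases b <;> simp [spin]

lemma sum_overlapConf {n : ℕ} (σ : Fin n → Bool) (F : (Fin n → Bool) → ℝ) :
    ∑ τ, F (overlapConf σ τ) = ∑ τ, F τ := by
  have hinv : Function.Involutive (overlapConf σ) := fun τ => by
    funext i
    simp only [overlapConf]
    cases σ i <;> cases τ i <;> rfl
  exact Equiv.sum_comp hinv.toPerm F

/-- The covariance of the Hamiltonian is `n ξ(R(σ, τ))`, with `R` the overlap. -/
lemma sum_hamCoef_mul (pmax n : ℕ) (hn : 0 < n) (γ : ℕ → ℝ) (σ τ : Fin n → Bool) :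
    ∑ I, hamCoef pmax n γ σ I * hamCoef pmax n γ τ I
      = n * mix pmax γ (mag (overlapConf σ τ) / n) := by
  have hn' : (0 : ℝ) < n := Nat.cast_pos.mpr hn
  set x := mag (overlapConf σ τ) with hx
  have hterm : ∀ p : Fin (pmax + 1),
      ∑ α : Fin (p : ℕ) → Fin n, hamCoef pmax n γ σ ⟨p, α⟩ * hamCoef pmax n γ τ ⟨p, α⟩
        = if 2 ≤ (p : ℕ) then n * (γ p ^ 2 * (x / n) ^ (p : ℕ)) else 0 := by
    intro p
    unfold hamCoef
    split_ifs with h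
    · have hpow : x ^ (p : ℕ) =
          ∑ α : Fin (p : ℕ) → Fin n, ∏ j, spin (overlapConf σ τ (α j)) := by
        rw [hx, mag, Fintype.sum_pow]
      have hscale : ((n : ℝ) ^ (-((((p : ℕ) : ℝ) - 1) / 2))) ^ 2 = n / n ^ (p : ℕ) := by
        rw [← Real.rpow_natCast, ← Real.rpow_mul hn'.le, ← Real.rpow_natCast (n : ℝ) (p : ℕ)]
        nth_rw 2 [← Real.rpow_one (n : ℝ)]
        rw [← Real.rpow_sub hn']
        congr 1
        push_cast
        ring
      rw [div_pow, show (n : ℝ) * (γ p ^ 2 * (x ^ (p : ℕ) / n ^ (p : ℕ)))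
        = γ p ^ 2 * (n / n ^ (p : ℕ)) * x ^ (p : ℕ) by ring, ← hscale, hpow, Finset.mul_sum]
      refine Finset.sum_congr rfl fun α _ => ?_
      simp only [overlapConf, spin_beq, Finset.prod_mul_distrib]
      ring
    · simp
  rw [Fintype.sum_sigma, Finset.sum_congr rfl fun p _ => hterm p,
    Fin.sum_univ_eq_sum_range
      (fun p => if 2 ≤ p then (n : ℝ) * (γ p ^ 2 * (x / n) ^ p) else 0) (pmax + 1),
    ← Finset.sum_filter, mix, Finset.mul_sum]
  refine Finset.sum_congr ?_ fun _ _ => rfl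
  ext p
  simp
  omega

lemma integrable_cexp_gaussianReal (z : ℂ) :
    Integrable (fun x : ℝ => Complex.exp (z * x)) (gaussianReal 0 1) := by
  have h := integrable_cexp_mul_of_re_mem_integrableExpSet (X := id) (μ := gaussianReal 0 1)
    (z := z) aemeasurable_id (by simp)
  simpa using h

lemma integral_cexp_gaussianReal (z : ℂ) :
    ∫ x : ℝ, Complex.exp (z * x) ∂(gaussianReal 0 1) = Complex.exp (z ^ 2 / 2) := by
  have h := complexMGF_id_gaussianReal (μ := 0) (v := 1) z
  simpa [complexMGF] using h

lemma integrable_cexp_linear (pmax n : ℕ) (c : SpinIdx pmax n → ℂ) :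
    Integrable (fun G : SpinIdx pmax n → ℝ => Complex.exp (∑ I, c I * G I)) (disorder pmax n) := by
  simp only [Complex.exp_sum]
  exact Integrable.fintype_prod fun I => integrable_cexp_gaussianReal (c I)

lemma integral_cexp_linear (pmax n : ℕ) (c : SpinIdx pmax n → ℂ) :
    ∫ G : SpinIdx pmax n → ℝ, Complex.exp (∑ I, c I * G I) ∂(disorder pmax n)
      = Complex.exp ((∑ I, c I ^ 2) / 2) := by
  simp only [Complex.exp_sum, disorder, Finset.sum_div]
  rw [integral_fintype_prod_eq_prod (fun (I : SpinIdx pmax n) (x : ℝ) => Complex.exp (c I * x))]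
  exact Finset.prod_congr rfl fun I _ => integral_cexp_gaussianReal (c I)

/-- The normalized partition function `Z_G(β) / E Z_G(β)`, where `E Z_G(β) = exp(β² n ξ(1) / 2)`. -/
noncomputable def normZ (pmax n : ℕ) (γ : ℕ → ℝ) (G : SpinIdx pmax n → ℝ) (β : ℂ) : ℂ :=
  Complex.exp (-(β ^ 2 * ((n * mix pmax γ 1 : ℝ) : ℂ) / 2)) * Zpart pmax n γ G β

lemma normZ_eq_zero_iff (pmax n : ℕ) (γ : ℕ → ℝ) (G : SpinIdx pmax n → ℝ) (β : ℂ) :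
    normZ pmax n γ G β = 0 ↔ Zpart pmax n γ G β = 0 := by
  simp [normZ, Complex.exp_ne_zero]

lemma normZ_zero (pmax n : ℕ) (γ : ℕ → ℝ) (G : SpinIdx pmax n → ℝ) :
    normZ pmax n γ G 0 = 1 := by
  simp [normZ, Zpart]

lemma differentiable_normZ (pmax n : ℕ) (γ : ℕ → ℝ) (G : SpinIdx pmax n → ℝ) :
    Differentiable ℂ (normZ pmax n γ G) := by
  unfold normZ Zpart
  fun_prop

lemma continuous_normZ_uncurry (pmax n : ℕ) (γ : ℕ → ℝ) :
    Continuous fun x : (SpinIdx pmax n → ℝ) × ℂ => normZ pmax n γ x.1 x.2 := by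
  unfold normZ Zpart
  simp only [hamiltonian_eq_sum]
  fun_prop

/-- `‖Z_G(β) / E Z_G(β)‖²` expanded as a sum over pairs of configurations. -/
lemma normZ_sq_eq (pmax n : ℕ) (γ : ℕ → ℝ) (G : SpinIdx pmax n → ℝ) (β : ℂ) :
    ((‖normZ pmax n γ G β‖ ^ 2 : ℝ) : ℂ) = ∑ σ : Fin n → Bool, ∑ τ : Fin n → Bool,
      ((2 : ℂ) ^ (-(n : ℤ))) ^ 2 *
        Complex.exp (-((β ^ 2 + (starRingEnd ℂ) β ^ 2) * ((n * mix pmax γ 1 : ℝ) : ℂ) / 2)) *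
        Complex.exp (∑ I, (β * hamCoef pmax n γ σ I
          + (starRingEnd ℂ) β * hamCoef pmax n γ τ I) * G I) := by
  set b := (starRingEnd ℂ) β with hb
  have hH : ∀ (z : ℂ) (σ : Fin n → Bool), z * (hamiltonian pmax n γ G σ : ℂ)
      = ∑ I, z * hamCoef pmax n γ σ I * G I := by
    intro z σ
    rw [hamiltonian_eq_sum]
    push_cast
    rw [Finset.mul_sum]
    exact Finset.sum_congr rfl fun I _ => by ring
  have hconj : (starRingEnd ℂ) (normZ pmax n γ G β) = normZ pmax n γ G b := by
    simp only [normZ, Zpart, map_mul, map_sum, ← Complex.exp_conj, map_neg, map_div₀, map_pow,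
      Complex.conj_ofReal, map_zpow₀, Complex.conj_ofNat, hb]
  rw [Complex.ofReal_pow, ← Complex.mul_conj', hconj]
  have hsum : ∀ σ τ : Fin n → Bool,
      Complex.exp (∑ I, (β * hamCoef pmax n γ σ I + b * hamCoef pmax n γ τ I) * G I)
      = Complex.exp (β * hamiltonian pmax n γ G σ) * Complex.exp (b * hamiltonian pmax n γ G τ) := by
    intro σ τ
    rw [← Complex.exp_add, hH, hH, ← Finset.sum_add_distrib]
    congr 1
    exact Finset.sum_congr rfl fun I _ => by ring
  have hexp : Complex.exp (-((β ^ 2 + b ^ 2) * ((n * mix pmax γ 1 : ℝ) : ℂ) / 2))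
      = Complex.exp (-(β ^ 2 * ((n * mix pmax γ 1 : ℝ) : ℂ) / 2))
        * Complex.exp (-(b ^ 2 * ((n * mix pmax γ 1 : ℝ) : ℂ) / 2)) := by
    rw [← Complex.exp_add]
    congr 1
    ring
  simp only [hsum, hexp, ← Finset.mul_sum, normZ, Zpart]
  rw [← Finset.sum_mul]
  ring

lemma mag_overlapConf_self {n : ℕ} (σ : Fin n → Bool) : mag (overlapConf σ σ) = n := by
  simp [mag, overlapConf, spin]

lemma integrable_normZ_sq (pmax n : ℕ) (γ : ℕ → ℝ) (β : ℂ) :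
    Integrable (fun G => ‖normZ pmax n γ G β‖ ^ 2) (disorder pmax n) := by
  have h : Integrable (fun G => ((‖normZ pmax n γ G β‖ ^ 2 : ℝ) : ℂ)) (disorder pmax n) := by
    simp only [normZ_sq_eq]
    exact integrable_finsetSum _ fun σ _ => integrable_finsetSum _ fun τ _ =>
      (integrable_cexp_linear pmax n _).const_mul _
  exact h.re

/-- The normalized second moment: `E ‖Z/EZ‖² = 2^{-n} Σ_σ exp(|β|² n ξ(mag σ / n))`. -/
lemma integral_normZ_sq (pmax n : ℕ) (hn : 0 < n) (γ : ℕ → ℝ) (β : ℂ) :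
    ∫ G, ‖normZ pmax n γ G β‖ ^ 2 ∂(disorder pmax n)
      = (2 ^ n)⁻¹ * ∑ σ : Fin n → Bool, Real.exp (‖β‖ ^ 2 * (n * mix pmax γ (mag σ / n))) := by
  have hn' : (n : ℝ) ≠ 0 := Nat.cast_ne_zero.mpr hn.ne'
  have hterm : ∀ σ τ : Fin n → Bool,
      ((2 : ℂ) ^ (-(n : ℤ))) ^ 2 *
        Complex.exp (-((β ^ 2 + (starRingEnd ℂ) β ^ 2) * ((n * mix pmax γ 1 : ℝ) : ℂ) / 2)) *
        Complex.exp ((∑ I, (β * hamCoef pmax n γ σ I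
          + (starRingEnd ℂ) β * hamCoef pmax n γ τ I) ^ 2) / 2)
      = (((2 ^ n)⁻¹ * (2 ^ n)⁻¹ *
        Real.exp (‖β‖ ^ 2 * (n * mix pmax γ (mag (overlapConf σ τ) / n))) : ℝ) : ℂ) := by
    intro σ τ
    have hself : ∀ ρ : Fin n → Bool, ∑ I, (hamCoef pmax n γ ρ I : ℂ) * hamCoef pmax n γ ρ I
        = ((n * mix pmax γ 1 : ℝ) : ℂ) := by
      intro ρ
      have := sum_hamCoef_mul pmax n hn γ ρ ρ
      rw [mag_overlapConf_self, div_self hn'] at this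
      exact_mod_cast this
    have hcross : ∑ I, (hamCoef pmax n γ σ I : ℂ) * hamCoef pmax n γ τ I
        = ((n * mix pmax γ (mag (overlapConf σ τ) / n) : ℝ) : ℂ) := by
      exact_mod_cast sum_hamCoef_mul pmax n hn γ σ τ
    have hsq : ∑ I, (β * (hamCoef pmax n γ σ I : ℂ)
          + (starRingEnd ℂ) β * hamCoef pmax n γ τ I) ^ 2
        = β ^ 2 * ((n * mix pmax γ 1 : ℝ) : ℂ)
          + (starRingEnd ℂ) β ^ 2 * ((n * mix pmax γ 1 : ℝ) : ℂ)
          + 2 * (β * (starRingEnd ℂ) β)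
            * ((n * mix pmax γ (mag (overlapConf σ τ) / n) : ℝ) : ℂ) := by
      rw [← hcross]
      nth_rw 1 [← hself σ]
      rw [← hself τ]
      simp only [Finset.mul_sum, ← Finset.sum_add_distrib]
      exact Finset.sum_congr rfl fun I _ => by ring
    rw [hsq, mul_assoc, ← Complex.exp_add, Complex.mul_conj']
    rw [Complex.ofReal_mul ((2 ^ n)⁻¹ * (2 ^ n)⁻¹) _, Complex.ofReal_exp]
    congr 1
    · simp [zpow_neg, sq]
    · congr 1
      push_cast
      ring
  have h : ∫ G, ((‖normZ pmax n γ G β‖ ^ 2 : ℝ) : ℂ) ∂(disorder pmax n)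
      = (((2 ^ n)⁻¹ * ∑ σ : Fin n → Bool,
        Real.exp (‖β‖ ^ 2 * (n * mix pmax γ (mag σ / n))) : ℝ) : ℂ) := by
    simp only [normZ_sq_eq]
    rw [integral_finsetSum _ fun σ _ => integrable_finsetSum _ fun τ _ =>
      (integrable_cexp_linear pmax n _).const_mul _]
    have hin : ∀ σ : Fin n → Bool, ∫ G : SpinIdx pmax n → ℝ, ∑ τ : Fin n → Bool,
      ((2 : ℂ) ^ (-(n : ℤ))) ^ 2 *
        Complex.exp (-((β ^ 2 + (starRingEnd ℂ) β ^ 2) * ((n * mix pmax γ 1 : ℝ) : ℂ) / 2)) *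
        Complex.exp (∑ I, (β * hamCoef pmax n γ σ I
          + (starRingEnd ℂ) β * hamCoef pmax n γ τ I) * G I) ∂(disorder pmax n)
        = (((2 ^ n)⁻¹ * (2 ^ n)⁻¹ * ∑ τ : Fin n → Bool,
          Real.exp (‖β‖ ^ 2 * (n * mix pmax γ (mag τ / n))) : ℝ) : ℂ) := by
      intro σ
      rw [integral_finsetSum _ fun τ _ => (integrable_cexp_linear pmax n _).const_mul _]
      simp only [integral_const_mul, integral_cexp_linear, hterm]
      rw [← Complex.ofReal_sum, ← Finset.mul_sum,
        sum_overlapConf σ fun τ => Real.exp (‖β‖ ^ 2 * (n * mix pmax γ (mag τ / n)))]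
    rw [Finset.sum_congr rfl fun σ _ => hin σ]
    simp only [Finset.sum_const, Finset.card_univ, Fintype.card_fun, Fintype.card_bool,
      Fintype.card_fin, nsmul_eq_mul]
    push_cast
    field_simp
  rw [integral_complex_ofReal] at h
  exact_mod_cast h

/-! ### Markov's inequality and conclusion -/

instance (pmax n : ℕ) : IsProbabilityMeasure (disorder pmax n) := by
  unfold disorder
  infer_instance

/-- Markov's inequality for the circle mean of `‖Z/EZ‖²`: it exceeds `C / δ` with probability at
most `δ`, when `C` bounds the normalized second moment on the circle. -/
lemma prob_lintegral_circle_le (pmax : ℕ) (γ : ℕ → ℝ) {R C δ : ℝ} (hC0 : 0 < C)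
    (hδ0 : 0 < δ) {n : ℕ} (hn : 0 < n)
    (hC : ∑ σ : Fin n → Bool, Real.exp (R ^ 2 * (n * mix pmax γ (mag σ / n))) ≤ 2 ^ n * C) :
    ENNReal.ofReal (1 - δ) ≤ disorder pmax n
      {G | ∫⁻ θ in Set.Ioc 0 (2 * Real.pi),
          ENNReal.ofReal (‖normZ pmax n γ G (circleMap 0 R θ)‖ ^ 2)
        ≤ ENNReal.ofReal (2 * Real.pi * (C / δ))} := by
  set F : (SpinIdx pmax n → ℝ) → ℝ → ENNReal := fun G θ =>
    ENNReal.ofReal (‖normZ pmax n γ G (circleMap 0 R θ)‖ ^ 2) with hF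
  have hFm : Measurable (Function.uncurry F) := by
    have hc : Continuous fun x : (SpinIdx pmax n → ℝ) × ℝ =>
        ‖normZ pmax n γ x.1 (circleMap 0 R x.2)‖ ^ 2 := by
      have h1 := continuous_normZ_uncurry pmax n γ
      have h2 := continuous_circleMap (0 : ℂ) R
      exact ((h1.comp (continuous_fst.prodMk (h2.comp continuous_snd))).norm).pow 2
    exact ENNReal.measurable_ofReal.comp hc.measurable
  set L : (SpinIdx pmax n → ℝ) → ENNReal := fun G => ∫⁻ θ in Set.Ioc 0 (2 * Real.pi), F G θ with hL
  have hLm : Measurable L := hFm.lintegral_prod_right'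
  have hmean : ∀ θ : ℝ, ∫⁻ G, F G θ ∂(disorder pmax n) ≤ ENNReal.ofReal C := by
    intro θ
    rw [hF, ← ofReal_integral_eq_lintegral_ofReal (integrable_normZ_sq pmax n γ _)
      (Filter.Eventually.of_forall fun G => by positivity), integral_normZ_sq pmax n hn]
    refine ENNReal.ofReal_le_ofReal ?_
    rw [norm_circleMap_zero, sq_abs, inv_mul_le_iff₀ (by positivity)]
    exact hC
  have hEL : ∫⁻ G, L G ∂(disorder pmax n) ≤ ENNReal.ofReal (2 * Real.pi * C) := by
    rw [hL, lintegral_lintegral_swap hFm.aemeasurable]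
    refine (lintegral_mono hmean).trans_eq ?_
    rw [lintegral_const, Measure.restrict_apply_univ, Real.volume_Ioc, sub_zero, mul_comm,
      ← ENNReal.ofReal_mul Real.two_pi_pos.le]
  have hpos : 0 < 2 * Real.pi * (C / δ) := mul_pos Real.two_pi_pos (div_pos hC0 hδ0)
  have hmarkov := meas_ge_le_lintegral_div (μ := disorder pmax n) hLm.aemeasurable
    (ε := ENNReal.ofReal (2 * Real.pi * (C / δ))) (by simpa using hpos) ENNReal.ofReal_ne_top
  have hbound : disorder pmax n {G | ENNReal.ofReal (2 * Real.pi * (C / δ)) ≤ L G}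
      ≤ ENNReal.ofReal δ := by
    refine hmarkov.trans ((ENNReal.div_le_div_right hEL _).trans_eq ?_)
    rw [← ENNReal.ofReal_div_of_pos hpos]
    congr 1
    have := Real.pi_pos
    field_simp
  have hmeas : MeasurableSet {G | L G ≤ ENNReal.ofReal (2 * Real.pi * (C / δ))} :=
    measurableSet_le hLm measurable_const
  have hcompl : disorder pmax n {G | L G ≤ ENNReal.ofReal (2 * Real.pi * (C / δ))}ᶜ
      ≤ ENNReal.ofReal δ :=
    le_trans (measure_mono fun G hG => by
      rw [Set.mem_compl_iff, Set.mem_ofPred_eq, not_le] at hG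
      exact hG.le) hbound
  rw [prob_compl_eq_one_sub hmeas, tsub_le_iff_right] at hcompl
  rw [ENNReal.ofReal_sub _ hδ0.le, ENNReal.ofReal_one, tsub_le_iff_right]
  rwa [add_comm] at hcompl

/-- For all `δ, ε ∈ (0,1)` there are `κ ∈ (0,1)`, `N` and `n₀` such that
for all `n ≥ n₀`, with probability at least `1 − δ` over the disorder, `Z_G` has no zeros
in `D(0, κ·β_2nd)` and at most `N` zeros in `D(0, (1−ε)·β_2nd)`. -/
theorem zeros_pspin_glass (pmax : ℕ) (hpmax : 2 ≤ pmax)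
    (γ : ℕ → ℝ) (hγ : ∀ p, 0 ≤ γ p) (hne : ∃ p ∈ Finset.Icc 2 pmax, γ p ≠ 0)
    (δ ε : ℝ) (hδ : δ ∈ Set.Ioo (0 : ℝ) 1) (hε : ε ∈ Set.Ioo (0 : ℝ) 1) :
    ∃ κ ∈ Set.Ioo (0 : ℝ) 1, ∃ N : ℕ, ∃ n₀ : ℕ, ∀ n ≥ n₀,
      ENNReal.ofReal (1 - δ) ≤ disorder pmax n
        {G | (∀ β ∈ Metric.ball (0 : ℂ) (κ * beta2nd pmax γ), Zpart pmax n γ G β ≠ 0) ∧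
          ({β ∈ Metric.ball (0 : ℂ) ((1 - ε) * beta2nd pmax γ) |
              Zpart pmax n γ G β = 0}).ncard ≤ N} := by
  rcases le_or_gt (beta2nd pmax γ) 0 with hB | hB
  · -- both disks are empty
    refine ⟨1 / 2, ⟨by norm_num, by norm_num⟩, 0, 0, fun n _ => ?_⟩
    have h1 : Metric.ball (0 : ℂ) (1 / 2 * beta2nd pmax γ) = ∅ :=
      Metric.ball_eq_empty.mpr (by linarith)
    have h2 : Metric.ball (0 : ℂ) ((1 - ε) * beta2nd pmax γ) = ∅ :=
      Metric.ball_eq_empty.mpr (mul_nonpos_of_nonneg_of_nonpos (by linarith [hε.2]) hB)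
    rw [h1, h2]
    simp
    exact hδ.1.le
  set B := beta2nd pmax γ with hBdef
  obtain ⟨hδ0, hδ1⟩ := hδ
  obtain ⟨hε0, hε1⟩ := hε
  have hR0 : 0 < (1 - ε / 2) * B := mul_pos (by linarith) hB
  have hr0 : 0 < (1 - ε) * B := mul_pos (by linarith) hB
  have hrR : (1 - ε) * B < (1 - ε / 2) * B := mul_lt_mul_of_pos_right (by linarith) hB
  obtain ⟨C, hC0, hC⟩ := exists_second_moment_bound pmax γ hR0
    (show (1 - ε / 2) * B < beta2nd pmax γ by nlinarith)
  set R := (1 - ε / 2) * B with hRdef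
  set r := (1 - ε) * B with hrdef
  set A := C / δ with hAdef
  have hA0 : 0 < A := div_pos hC0 hδ0
  have hlog : 0 < Real.log (R / r) := Real.log_pos (by rwa [one_lt_div hr0])
  have he1 : Real.exp (-(A + 1)) < 1 := Real.exp_lt_one_iff.mpr (by linarith)
  have he0 := Real.exp_pos (-(A + 1))
  -- the radius `κ B` is chosen so small that a single zero inside costs more than `A` in Jensen
  refine ⟨(1 - ε) * Real.exp (-(A + 1)), ⟨by nlinarith, by nlinarith⟩,
    ⌈A / Real.log (R / r)⌉₊, 1, fun n hn => ?_⟩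
  refine (prob_lintegral_circle_le pmax γ hC0 hδ0 hn (hC n hn)).trans (measure_mono ?_)
  intro G hG
  have hcount : ∀ s, 0 < s → s < R → ∀ S : Finset ℂ,
      (∀ z ∈ S, z ∈ Metric.ball (0 : ℂ) s ∧ Zpart pmax n γ G z = 0) →
      S.card * Real.log (R / s) ≤ A := fun s hs hsR S hS =>
    card_zeros_mul_log_le_of_lintegral (differentiable_normZ pmax n γ G) (normZ_zero pmax n γ G)
      hs hsR hA0.le hG S fun z hz => ⟨(hS z hz).1, (normZ_eq_zero_iff ..).mpr (hS z hz).2⟩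
  constructor
  · intro β hβ h0
    have hs : (1 - ε) * Real.exp (-(A + 1)) * B = r * Real.exp (-(A + 1)) := by
      rw [hrdef]
      ring
    rw [hs] at hβ
    have h := hcount _ (mul_pos hr0 he0) (by nlinarith) {β} (by simpa using ⟨by simpa using hβ, h0⟩)
    have hl : Real.log (R / (r * Real.exp (-(A + 1)))) = Real.log (R / r) + (A + 1) := by
      rw [← div_div, Real.log_div (by positivity) he0.ne', Real.log_exp]
      ring
    rw [hl] at h
    simp at h
    linarith
  · by_cases hfin : {β ∈ Metric.ball (0 : ℂ) r | Zpart pmax n γ G β = 0}.Finite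
    · have h := hcount r hr0 hrR hfin.toFinset fun z hz => by
        simpa using (hfin.mem_toFinset.mp hz)
      rw [Set.ncard_eq_toFinset_card _ hfin]
      have h2 := ((le_div_iff₀ hlog).mpr h).trans (Nat.le_ceil _)
      exact_mod_cast h2
    · rw [Set.Infinite.ncard hfin]
      exact Nat.zero_le _
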